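/- Let R = MvPolynomial (Fin r) ℝ be the real polynomial ring in r variables and let α : (V, d) → (V', d') be a quasi-isomorphism of cochain complexes of R-modules such that every term V^i and every term (V')^i is a projective (equivalently, free) R-module. Then the induced morphism Hom•(α, R) : Hom•(V', R) → Hom•(V, R) between the R-dual complexes, given degreewise by precomposition with α, is a quasi-isomorphism. -/

import Mathlib

/-!
A quasi-isomorphism has an acyclic mapping cone, here with projective terms, and dualizing `α` is
a quasi-isomorphism as soon as the dual of the cone is acyclic. For that it suffices that the
modules of cycles of the cone are projective, since the cone then splits into short split exact
sequences.

For an acyclic complex of projectives, projectivity of all cycles is proved by induction on the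
number of variables (`AcyclicProjectiveSplits.mvPolynomial`), in place of citing finiteness of the
global dimension. Over a field there is nothing to prove. If the claim holds over `R`, then the
cycles `Z` of an acyclic complex of projective `R[X]`-modules are projective over `R`, because
projective `R[X]`-modules are. The exact sequence `0 → R[X] ⊗ Z → R[X] ⊗ Z → Z → 0` whose first
map is `X ⊗ 1 - 1 ⊗ X` (`charMap_injective`, `charMap_exact`) then resolves `Z` by projective
`R[X]`-modules, and Schanuel's lemma applied to `0 → Z i → C i → Z (i + 1) → 0`
(`schanuel_projective`) shows that `Z i` is projective over `R[X]`.
-/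

/-- Cast between the terms of a complex along an equality of indices. -/
def vcast (R : Type*) [Ring R] (V : ℤ → Type*) [∀ i, AddCommGroup (V i)]
    [∀ i, Module R (V i)] {i j : ℤ} (h : i = j) : V i ≃ₗ[R] V j := by
  subst h; exact LinearEquiv.refl R (V i)

/-- `α : (V, d) → (V', d')` is a quasi-isomorphism: in every degree the induced map on
cohomology is injective and surjective.  (Every degree of `ℤ` has the form `i + 1`.) -/
def IsQuasiIso (R : Type*) [Ring R]
    (V : ℤ → Type*) [∀ i, AddCommGroup (V i)] [∀ i, Module R (V i)]
    (V' : ℤ → Type*) [∀ i, AddCommGroup (V' i)] [∀ i, Module R (V' i)]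
    (d : ∀ i, V i →ₗ[R] V (i + 1)) (d' : ∀ i, V' i →ₗ[R] V' (i + 1))
    (α : ∀ i, V i →ₗ[R] V' i) : Prop :=
  ∀ i : ℤ,
    (∀ z : V (i + 1), d (i + 1) z = 0 → (∃ w' : V' i, α (i + 1) z = d' i w') →
      ∃ w : V i, z = d i w) ∧
    (∀ z' : V' (i + 1), d' (i + 1) z' = 0 →
      ∃ z : V (i + 1), d (i + 1) z = 0 ∧ ∃ w' : V' i, z' - α (i + 1) z = d' i w')

/-- The differential of the `R`-dual complex: `D m = -(-1)^m ⬝ (d (-(m+1)))^t`. -/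
def dualD (R : Type*) [CommRing R] (V : ℤ → Type*) [∀ i, AddCommGroup (V i)]
    [∀ i, Module R (V i)] (d : ∀ i, V i →ₗ[R] V (i + 1)) (m : ℤ) :
    Module.Dual R (V (-m)) →ₗ[R] Module.Dual R (V (-(m + 1))) :=
  ((((m + 1).negOnePow : ℤˣ) : ℤ) : R) •
    ((d (-(m + 1))).dualMap ∘ₗ
      ((vcast R V (show -(m + 1) + 1 = -m by omega)).toLinearMap.dualMap))

/-! ### The resolution `0 → R[X] ⊗ M → R[X] ⊗ M → M → 0` -/

open TensorProduct in
/-- The action map `s ⊗ m ↦ s • m` of an `S`-module `M`, on the extension of scalars of its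
restriction to `R`. -/
abbrev actMap (R S M : Type*) [CommRing R] [CommRing S] [Algebra R S] [AddCommGroup M]
    [Module R M] [Module S M] [IsScalarTower R S M] : S ⊗[R] M →ₗ[S] M :=
  LinearMap.liftBaseChange S (LinearMap.id : M →ₗ[R] M)

open TensorProduct Polynomial in
/-- The endomorphism `X ⊗ 1 - 1 ⊗ X` of `R[X] ⊗[R] M`, for an `R[X]`-module `M`. -/
noncomputable def charMap (R M : Type*) [CommRing R] [AddCommGroup M]
    [Module R M] [Module R[X] M] [IsScalarTower R R[X] M] :
    R[X] ⊗[R] M →ₗ[R[X]] R[X] ⊗[R] M :=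
  LinearMap.lsmul R[X] (R[X] ⊗[R] M) X -
    ((LinearMap.lsmul R[X] M X).restrictScalars R).baseChange R[X]

section CharacteristicSequence
open TensorProduct Polynomial

variable {R M : Type*} [CommRing R] [AddCommGroup M]
  [Module R M] [Module R[X] M] [IsScalarTower R R[X] M]

lemma charMap_tmul (p : R[X]) (m : M) :
    charMap R M (p ⊗ₜ m) = (X * p) ⊗ₜ m - p ⊗ₜ ((X : R[X]) • m) := by
  simp [charMap, smul_tmul']

lemma actMap_surjective : Function.Surjective (actMap R R[X] M) :=
  fun m => ⟨1 ⊗ₜ m, by simp⟩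

/-- The `n`-th coefficient of an element of `R[X] ⊗[R] M`, seen as a polynomial with
coefficients in `M`. -/
noncomputable def tcoeff (t : R[X] ⊗[R] M) : ℕ →₀ M :=
  (PolynomialModule.polynomialTensorProductLEquivPolynomialModule R M t).coeff

omit [Module R[X] M] [IsScalarTower R R[X] M] in
lemma tcoeff_X_smul (t : R[X] ⊗[R] M) (n : ℕ) :
    tcoeff ((X : R[X]) • t) (n + 1) = tcoeff t n := by
  simp [tcoeff, ← Polynomial.monomial_one_one_eq_X]

omit [Module R[X] M] [IsScalarTower R R[X] M] in
lemma tcoeff_baseChange (f : M →ₗ[R] M) (t : R[X] ⊗[R] M) (n : ℕ) :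
    tcoeff (f.baseChange R[X] t) n = f (tcoeff t n) := by
  induction t using TensorProduct.induction_on with
  | zero => simp [tcoeff]
  | add a b ha hb => simp_all [tcoeff]
  | tmul p m =>
    simp [tcoeff, PolynomialModule.polynomialTensorProductLEquivPolynomialModule,
      PolynomialModule.lsingle]

/-- If `X t = (1 ⊗ X) t`, every coefficient of `t` is `X` times the next one, and these vanish
eventually. -/
lemma charMap_injective : Function.Injective (charMap R M) := by
  rw [injective_iff_map_eq_zero]
  intro t ht
  have h1 : ∀ n, tcoeff t n = (X : R[X]) • tcoeff t (n + 1) := by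
    intro n
    have h2 : (X : R[X]) • t =
        ((LinearMap.lsmul R[X] M X).restrictScalars R).baseChange R[X] t := by
      simpa [charMap, sub_eq_zero] using ht
    rw [← tcoeff_X_smul t n, h2, tcoeff_baseChange]
    simp
  have h3 : ∀ k n, tcoeff t n = (X : R[X]) ^ k • tcoeff t (n + k) := by
    intro k
    induction k with
    | zero => simp
    | succ k ih =>
      intro n
      rw [ih n, h1 (n + k), smul_smul, ← pow_succ, add_assoc]
  have h4 : tcoeff t = 0 := by
    ext n
    rw [h3 ((tcoeff t).support.sup id + 1) n, Finsupp.notMem_support_iff.mp, smul_zero]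
    · rfl
    · intro h
      have := Finset.le_sup (f := id) h
      simp only [id] at this
      omega
  have h5 := PolynomialModule.coeff_eq_zero.mp h4
  simpa using h5

lemma charMap_exact : Function.Exact (charMap R M) (actMap R R[X] M) := by
  have hcomp : ∀ t, actMap R R[X] M (charMap R M t) = 0 := by
    intro t
    induction t using TensorProduct.induction_on with
    | zero => simp
    | add a b ha hb => rw [map_add, map_add, ha, hb, add_zero]
    | tmul p m => simp [charMap_tmul, mul_smul, smul_comm p (X : R[X]) m]
  -- Modulo the image of `X ⊗ 1 - 1 ⊗ X`, each `p ⊗ m` equals `1 ⊗ p m`.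
  have key : ∀ t : R[X] ⊗[R] M,
      t - 1 ⊗ₜ (actMap R R[X] M t) ∈ LinearMap.range (charMap R M) := by
    intro t
    induction t using TensorProduct.induction_on with
    | zero => simp
    | add a b ha hb =>
      convert add_mem ha hb using 1
      rw [map_add, tmul_add]; abel
    | tmul p m =>
      induction p using Polynomial.induction_on generalizing m with
      | C a =>
        have : (C a : R[X]) = a • 1 := by simp [Polynomial.smul_eq_C_mul]
        rw [this]
        simp [smul_tmul]
      | add p q hp hq =>
        convert add_mem (hp m) (hq m) using 1
        rw [add_tmul, map_add, tmul_add]; abel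
      | monomial n a ih =>
        have := add_mem (LinearMap.mem_range_self (charMap R M) ((C a * X ^ n) ⊗ₜ m))
          (ih ((X : R[X]) • m))
        convert this using 1
        rw [charMap_tmul]
        simp only [LinearMap.liftBaseChange_tmul, LinearMap.id_apply, smul_smul]
        rw [show X * (C a * X ^ n) = C a * X ^ (n + 1) by ring,
          show C a * X ^ n * X = C a * X ^ (n + 1) by ring]
        abel
  intro t
  constructor
  · intro ht
    have := key t
    rwa [ht, tmul_zero, sub_zero] at this
  · rintro ⟨s, rfl⟩
    exact hcomp s

end CharacteristicSequence

/-! ### Cycles of acyclic complexes of projectives -/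

/-- Schanuel's lemma, in the form: if one surjection from a projective module onto `M` has
projective kernel, so has any other. -/
lemma schanuel_projective {S K P M L Q : Type*} [Ring S]
    [AddCommGroup K] [Module S K] [AddCommGroup P] [Module S P] [AddCommGroup M] [Module S M]
    [AddCommGroup L] [Module S L] [AddCommGroup Q] [Module S Q]
    [Module.Projective S P] [Module.Projective S L] [Module.Projective S Q]
    (f : K →ₗ[S] P) (g : P →ₗ[S] M) (hf : Function.Injective f) (hfg : Function.Exact f g)
    (hg : Function.Surjective g)
    (j : L →ₗ[S] Q) (e : Q →ₗ[S] M) (hj : Function.Injective j) (hje : Function.Exact j e)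
    (he : Function.Surjective e) : Module.Projective S K := by
  obtain ⟨u, hu⟩ := Module.projective_lifting_property e g he
  obtain ⟨v, hv⟩ := Module.projective_lifting_property g e hg
  have hu' : ∀ p, e (u p) = g p := fun p => LinearMap.congr_fun hu p
  have hv' : ∀ q, g (v q) = e q := fun q => LinearMap.congr_fun hv q
  -- `K` is a retract of `P × L`: embed by `k ↦ (f k, b k)` with `j (b k) = u (f k)`, and retract
  -- by `(p, l) ↦ f⁻¹ (p - v (u p) + v (j l))`.
  let eK : K ≃ₗ[S] LinearMap.range f := LinearEquiv.ofInjective f hf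
  let eL : L ≃ₗ[S] LinearMap.range j := LinearEquiv.ofInjective j hj
  let b : K →ₗ[S] L := eL.symm.toLinearMap ∘ₗ (u ∘ₗ f).codRestrict (LinearMap.range j)
    (fun k => (hje _).mp (by simp [hu', hfg.apply_apply_eq_zero]))
  let a : P × L →ₗ[S] K := eK.symm.toLinearMap ∘ₗ
    (LinearMap.coprod (LinearMap.id - v ∘ₗ u) (v ∘ₗ j)).codRestrict (LinearMap.range f)
    (fun x => (hfg _).mp (by simp [hu', hv', hje.apply_apply_eq_zero]))
  have hb : ∀ k, j (b k) = u (f k) := fun k =>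
    congrArg Subtype.val (eL.apply_symm_apply ⟨u (f k), _⟩)
  have ha : ∀ x, f (a x) = x.1 - v (u x.1) + v (j x.2) := fun x =>
    congrArg Subtype.val (eK.apply_symm_apply ⟨x.1 - v (u x.1) + v (j x.2), _⟩)
  refine Module.Projective.of_split (f.prod b) a (LinearMap.ext fun k => hf ?_)
  simp [ha, hb]

/-- A projective module over a projective algebra is projective over the base ring. -/
lemma projective_restrict (R S P : Type*) [CommRing R] [CommRing S] [Algebra R S]
    [Module.Projective R S] [AddCommGroup P] [Module R P] [Module S P] [IsScalarTower R S P]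
    [h : Module.Projective S P] : Module.Projective R P := by
  obtain ⟨s, hs⟩ := h.out
  classical
  have : Module.Projective R (P →₀ S) :=
    Module.Projective.of_equiv' (finsuppLequivDFinsupp R (ι := P) (M := S)).symm
  exact Module.Projective.of_split (s.restrictScalars R)
    ((Finsupp.linearCombination S (id : P → P)).restrictScalars R) (LinearMap.ext hs)

universe u v w

/-- Every acyclic complex of projective `R`-modules, given by its short exact sequences
`0 → Z i → C i → Z (i + 1) → 0`, has projective modules of cycles. -/
def AcyclicProjectiveSplits (R : Type u) [CommRing R] : Prop :=
  ∀ (Z C : ℤ → Type v) [∀ i, AddCommGroup (Z i)] [∀ i, AddCommGroup (C i)]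
    [∀ i, Module R (Z i)] [∀ i, Module R (C i)]
    (f : ∀ i, Z i →ₗ[R] C i) (g : ∀ i, C i →ₗ[R] Z (i + 1)),
    (∀ i, Function.Injective (f i)) → (∀ i, Function.Exact (f i) (g i)) →
    (∀ i, Function.Surjective (g i)) → (∀ i, Module.Projective R (C i)) →
    ∀ i, Module.Projective R (Z i)

lemma AcyclicProjectiveSplits.of_field (k : Type u) [Field k] :
    AcyclicProjectiveSplits.{u, v} k :=
  fun _ _ _ _ _ _ _ _ _ _ _ _ _ => inferInstance

lemma AcyclicProjectiveSplits.of_ringEquiv {R : Type u} {S : Type w} [CommRing R] [CommRing S]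
    (e : R ≃+* S) (h : AcyclicProjectiveSplits.{u, v} R) : AcyclicProjectiveSplits.{w, v} S := by
  intro Z C _ _ _ _ f g hf hfg hg hC i
  let : Algebra R S := (e : R →+* S).toAlgebra
  let : ∀ i, Module R (Z i) := fun i => Module.compHom (Z i) (algebraMap R S)
  let : ∀ i, Module R (C i) := fun i => Module.compHom (C i) (algebraMap R S)
  have : ∀ i, IsScalarTower R S (Z i) := fun i => IsScalarTower.of_compHom R S (Z i)
  have : ∀ i, IsScalarTower R S (C i) := fun i => IsScalarTower.of_compHom R S (C i)
  let := RingHomInvPair.of_ringEquiv e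
  let := RingHomInvPair.of_ringEquiv e.symm
  have : RingHomInvPair (e : R →+* S) (e.symm : S →+* R) := ⟨by simp, by simp⟩
  have : RingHomInvPair (e.symm : S →+* R) (e : R →+* S) := ⟨by simp, by simp⟩
  have hC' : ∀ i, Module.Projective R (C i) := fun i =>
    Module.Projective.of_equiv (R := S) (M := C i) (σ := (e.symm : S →+* R))
      (σ' := (e : R →+* S))
      { AddEquiv.refl (C i) with
        map_smul' := fun s x => by
          change s • x = e (e.symm s) • x
          simp }
  have := h Z C (fun i => (f i).restrictScalars R) (fun i => (g i).restrictScalars R)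
    hf hfg hg hC' i
  exact Module.Projective.of_equiv (R := R) (M := Z i) (σ := (e : R →+* S))
    (σ' := (e.symm : S →+* R))
    { AddEquiv.refl (Z i) with map_smul' := fun s x => rfl }

/-- The cycles of an acyclic complex of projective `R[X]`-modules are projective over `R`, hence
of projective dimension at most one over `R[X]`; being also syzygies of one another, they are
projective over `R[X]`. -/
lemma AcyclicProjectiveSplits.polynomial {R : Type u} [CommRing R]
    (h : AcyclicProjectiveSplits.{u, v} R) :
    AcyclicProjectiveSplits.{u, v} (Polynomial R) := by
  intro Z C _ _ _ _ f g hf hfg hg hC i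
  let : ∀ i, Module R (Z i) := fun i => Module.compHom (Z i) (algebraMap R (Polynomial R))
  let : ∀ i, Module R (C i) := fun i => Module.compHom (C i) (algebraMap R (Polynomial R))
  have : ∀ i, IsScalarTower R (Polynomial R) (Z i) := fun i => IsScalarTower.of_compHom _ _ _
  have : ∀ i, IsScalarTower R (Polynomial R) (C i) := fun i => IsScalarTower.of_compHom _ _ _
  have hZ := h Z C (fun i => (f i).restrictScalars R) (fun i => (g i).restrictScalars R)
    hf hfg hg (fun i => projective_restrict R (Polynomial R) (C i)) (i + 1)
  exact schanuel_projective (f i) (g i) (hf i) (hfg i) (hg i)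
    (charMap R (Z (i + 1))) (actMap R (Polynomial R) (Z (i + 1)))
    charMap_injective charMap_exact actMap_surjective

lemma AcyclicProjectiveSplits.mvPolynomial (k : Type u) [Field k] (r : ℕ) :
    AcyclicProjectiveSplits.{u, v} (MvPolynomial (Fin r) k) := by
  induction r with
  | zero => exact (of_field k).of_ringEquiv (MvPolynomial.isEmptyRingEquiv k (Fin 0)).symm
  | succ n ih => exact ih.polynomial.of_ringEquiv (MvPolynomial.finSuccEquiv k n).symm.toRingEquiv

/-- A functional on `C k` that kills the cycles extends along the differential: the dual of an
acyclic complex of projectives is acyclic. -/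
lemma exists_dual_factor {R : Type u} [CommRing R] (h : AcyclicProjectiveSplits.{u, v} R)
    (C : ℤ → Type v) [∀ i, AddCommGroup (C i)] [∀ i, Module R (C i)]
    (D : ∀ i, C i →ₗ[R] C (i + 1)) (hC : ∀ i, Module.Projective R (C i))
    (hD : ∀ i, Function.Exact (D i) (D (i + 1)))
    (k : ℤ) (φ : C k →ₗ[R] R) (hφ : ∀ c, D k c = 0 → φ c = 0) :
    ∃ ψ : C (k + 1) →ₗ[R] R, ∀ c, φ c = ψ (D k c) := by
  let g : ∀ i, C i →ₗ[R] LinearMap.ker (D (i + 1)) := fun i =>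
    (D i).codRestrict _ (fun c => (hD i).apply_apply_eq_zero c)
  have hgD : ∀ i c, (g i c : C (i + 1)) = D i c := fun _ _ => rfl
  have hg : ∀ i, Function.Surjective (g i) := fun i z => by
    obtain ⟨c, hc⟩ := (hD i z.1).mp z.2
    exact ⟨c, Subtype.ext hc⟩
  have hZ := h (fun i => LinearMap.ker (D i)) C (fun i => (LinearMap.ker (D i)).subtype) g
    (fun i => Subtype.val_injective)
    (fun i c => by
      constructor
      · intro hc
        exact ⟨⟨c, congrArg Subtype.val hc⟩, rfl⟩
      · rintro ⟨z, rfl⟩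
        exact Subtype.ext z.2) hg hC
  obtain ⟨t, ht⟩ := Module.projective_lifting_property (g k) LinearMap.id (hg k)
  obtain ⟨s, hs⟩ := Module.projective_lifting_property (g (k + 1)) LinearMap.id (hg (k + 1))
  have ht' : ∀ z, D k (t z) = z := fun z => congrArg Subtype.val (LinearMap.congr_fun ht z)
  have hs' : ∀ z, D (k + 1) (s z) = z := fun z => congrArg Subtype.val (LinearMap.congr_fun hs z)
  let ρ : C (k + 1) →ₗ[R] LinearMap.ker (D (k + 1)) :=
    (LinearMap.id - s ∘ₗ g (k + 1)).codRestrict _ (fun c => by simp [hs', hgD])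
  refine ⟨φ ∘ₗ t ∘ₗ ρ, fun c => ?_⟩
  have hρ : ρ (D k c) = g k c := by
    have h0 : g (k + 1) (D k c) = 0 := Subtype.ext ((hD k).apply_apply_eq_zero c)
    exact Subtype.ext (by simp [ρ, h0, hgD])
  have := hφ (c - t (g k c)) (by rw [map_sub, ht', hgD, sub_self])
  rw [map_sub, sub_eq_zero] at this
  simp [this, hρ]

/-! ### The mapping cone and its dual -/

section Cone

variable {R : Type u} [CommRing R]
  {V : ℤ → Type v} [∀ i, AddCommGroup (V i)] [∀ i, Module R (V i)]
  {V' : ℤ → Type w} [∀ i, AddCommGroup (V' i)] [∀ i, Module R (V' i)]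
  (d : ∀ i, V i →ₗ[R] V (i + 1)) (d' : ∀ i, V' i →ₗ[R] V' (i + 1))
  (α : ∀ i, V i →ₗ[R] V' i)

/-- The differential `(v, w) ↦ (-d v, α v + d' w)` of the mapping cone of `α`, whose term in
degree `i` is `V (i + 1) × V' i`. -/
def coneD (i : ℤ) : V (i + 1) × V' i →ₗ[R] V (i + 1 + 1) × V' (i + 1) :=
  LinearMap.prod (-(d (i + 1)) ∘ₗ LinearMap.fst R _ _)
    (LinearMap.coprod (α (i + 1)) (d' i))

lemma coneD_apply (i : ℤ) (v : V (i + 1)) (w : V' i) :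
    coneD d d' α i (v, w) = (-(d (i + 1) v), α (i + 1) v + d' i w) := by
  simp [coneD]

variable {d d' α}

lemma coneD_exact (hd : ∀ i, d (i + 1) ∘ₗ d i = 0) (hd' : ∀ i, d' (i + 1) ∘ₗ d' i = 0)
    (hα : ∀ i, d' i ∘ₗ α i = α (i + 1) ∘ₗ d i) (hqi : IsQuasiIso R V V' d d' α) (i : ℤ) :
    Function.Exact (coneD d d' α i) (coneD d d' α (i + 1)) := by
  have hd1 : ∀ i x, d (i + 1) (d i x) = 0 := fun i x => LinearMap.congr_fun (hd i) x
  have hd1' : ∀ i x, d' (i + 1) (d' i x) = 0 := fun i x => LinearMap.congr_fun (hd' i) x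
  have hα1 : ∀ i x, d' i (α i x) = α (i + 1) (d i x) := fun i x => LinearMap.congr_fun (hα i) x
  rintro ⟨v, w⟩
  constructor
  · intro h
    rw [coneD_apply, Prod.mk_eq_zero, neg_eq_zero] at h
    obtain ⟨h1, h2⟩ := h
    obtain ⟨a, rfl⟩ := (hqi (i + 1)).1 v h1
      ⟨-w, by rw [map_neg]; exact eq_neg_of_add_eq_zero_left h2⟩
    obtain ⟨z, hz, w', hw'⟩ := (hqi i).2 (w + α (i + 1) a) (by
      rw [map_add, hα1]; exact (add_comm _ _).trans h2)
    refine ⟨(z - a, w'), ?_⟩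
    rw [coneD_apply, map_sub, map_sub, hz, ← hw']
    ext1
    · simp
    · simp only; abel
  · rintro ⟨⟨a, b⟩, h⟩
    rw [coneD_apply] at h
    rw [← h, coneD_apply]
    simp [hd1, hd1', hα1]

variable (h : AcyclicProjectiveSplits.{u, max v w} R)
  (hproj : ∀ i, Module.Projective R (V i)) (hproj' : ∀ i, Module.Projective R (V' i))
  (hd : ∀ i, d (i + 1) ∘ₗ d i = 0) (hd' : ∀ i, d' (i + 1) ∘ₗ d' i = 0)
  (hα : ∀ i, d' i ∘ₗ α i = α (i + 1) ∘ₗ d i) (hqi : IsQuasiIso R V V' d d' α)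

include h hproj hproj' hd hd' hα hqi

/-- The dual of `α` is injective on cohomology: a cocycle `z` with `z ∘ α = w' ∘ d` gives the
cocycle `(w', z)` of the dual cone. The equations `h1`, `h2` leave the degrees free, so that the
lemma applies to the negated degrees of the dual complex. -/
lemma dual_injective (k n p : ℤ) (h1 : k + 1 = n) (h2 : n + 1 = p) (z : V' n →ₗ[R] R)
    (hz : ∀ x, z (vcast R V' h1 (d' k x)) = 0) (w' : V p →ₗ[R] R)
    (hzw : ∀ x, z (α n x) = w' (vcast R V h2 (d n x))) :
    ∃ w : V' p →ₗ[R] R, ∀ x, z x = w (vcast R V' h2 (d' n x)) := by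
  subst h1 h2
  have hex := coneD_exact hd hd' hα hqi
  obtain ⟨ψ, hψ⟩ := exists_dual_factor h (fun i => V (i + 1) × V' i) (coneD d d' α)
    (fun i => inferInstance) hex (k + 1) (LinearMap.coprod w' z) (by
      intro c hc
      obtain ⟨⟨v, w⟩, rfl⟩ := (hex k c).mp hc
      rw [coneD_apply]
      have e1 := hz w
      have e2 := hzw v
      simp only [vcast, LinearEquiv.refl_apply] at e1 e2
      simp [e1, e2])
  refine ⟨ψ ∘ₗ LinearMap.inr R _ _, fun x => ?_⟩
  have := hψ (0, x)
  rw [coneD_apply] at this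
  simpa [vcast] using this

/-- The dual of `α` is surjective on cohomology: a cocycle `z'` gives the cocycle `(z', 0)` of the
dual cone, and any `ψ` with coboundary `(z', 0)` restricts to a preimage of its class. -/
lemma dual_surjective (k n p : ℤ) (h1 : k + 1 = n) (h2 : n + 1 = p) (z' : V n →ₗ[R] R)
    (hz : ∀ x, z' (vcast R V h1 (d k x)) = 0) :
    ∃ z : V' n →ₗ[R] R, (∀ x, z (vcast R V' h1 (d' k x)) = 0) ∧
      ∃ w : V p →ₗ[R] R, ∀ x, z' x - z (α n x) = w (vcast R V h2 (d n x)) := by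
  subst h1 h2
  have hex := coneD_exact hd hd' hα hqi
  obtain ⟨ψ, hψ⟩ := exists_dual_factor h (fun i => V (i + 1) × V' i) (coneD d d' α)
    (fun i => inferInstance) hex k (z' ∘ₗ LinearMap.fst R _ _) (by
      rintro ⟨v, w⟩ hc
      rw [coneD_apply, Prod.mk_eq_zero, neg_eq_zero] at hc
      obtain ⟨a, rfl⟩ := (hqi k).1 v hc.1
        ⟨-w, by rw [map_neg]; exact eq_neg_of_add_eq_zero_left hc.2⟩
      exact hz a)
  have hψ' : ∀ v w, z' v = ψ (-(d (k + 1) v), α (k + 1) v + d' k w) := fun v w => by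
    have := hψ (v, w)
    rwa [coneD_apply] at this
  refine ⟨ψ ∘ₗ LinearMap.inr R _ _, fun x => ?_, -(ψ ∘ₗ LinearMap.inl R _ _), fun x => ?_⟩
  · simpa [vcast] using (hψ' 0 x).symm
  · rw [hψ' x 0, LinearMap.comp_apply, ← map_sub]
    simp [vcast, ← map_neg]

end Cone

/-- Up to a sign `ε`, of which only `ε ^ 2 = 1` matters, the dual differential is precomposition
with `d`. -/
lemma dualD_apply_eq (R : Type*) [CommRing R] (V : ℤ → Type*) [∀ i, AddCommGroup (V i)]
    [∀ i, Module R (V i)] (d : ∀ i, V i →ₗ[R] V (i + 1)) (m : ℤ) :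
    ∃ ε : R, ε * ε = 1 ∧ ∀ (f : Module.Dual R (V (-m))) (x : V (-(m + 1))),
      dualD R V d m f x =
        ε * f (vcast R V (show -(m + 1) + 1 = -m by omega) (d (-(m + 1)) x)) := by
  refine ⟨((((m + 1).negOnePow : ℤˣ) : ℤ) : R), ?_, fun f x => by simp [dualD]⟩
  rcases Int.units_eq_one_or ((m + 1).negOnePow) with h | h <;> simp [h]

/-- **Dualizing a quasi-isomorphism of complexes of projective modules over a polynomial
ring.**  Let `R = ℝ[x_1, …, x_r]` and let `α : (V, d) → (V', d')` be a quasi-isomorphism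
of cochain complexes of `R`-modules all of whose terms are projective.  Then the induced
morphism `Hom•(V', R) → Hom•(V, R)` between the `R`-dual complexes, given degreewise by
precomposition with `α`, is a quasi-isomorphism. -/
theorem stmt13 (r : ℕ)
    (V : ℤ → Type*) [∀ i, AddCommGroup (V i)]
    [∀ i, Module (MvPolynomial (Fin r) ℝ) (V i)]
    (V' : ℤ → Type*) [∀ i, AddCommGroup (V' i)]
    [∀ i, Module (MvPolynomial (Fin r) ℝ) (V' i)]
    (d : ∀ i, V i →ₗ[MvPolynomial (Fin r) ℝ] V (i + 1))
    (d' : ∀ i, V' i →ₗ[MvPolynomial (Fin r) ℝ] V' (i + 1))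
    (hd : ∀ i, d (i + 1) ∘ₗ d i = 0) (hd' : ∀ i, d' (i + 1) ∘ₗ d' i = 0)
    (hproj : ∀ i, Module.Projective (MvPolynomial (Fin r) ℝ) (V i))
    (hproj' : ∀ i, Module.Projective (MvPolynomial (Fin r) ℝ) (V' i))
    (α : ∀ i, V i →ₗ[MvPolynomial (Fin r) ℝ] V' i)
    (hα : ∀ i, d' i ∘ₗ α i = α (i + 1) ∘ₗ d i)
    (hqi : IsQuasiIso (MvPolynomial (Fin r) ℝ) V V' d d' α) :
    IsQuasiIso (MvPolynomial (Fin r) ℝ)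
      (fun m => Module.Dual (MvPolynomial (Fin r) ℝ) (V' (-m)))
      (fun m => Module.Dual (MvPolynomial (Fin r) ℝ) (V (-m)))
      (dualD (MvPolynomial (Fin r) ℝ) V' d') (dualD (MvPolynomial (Fin r) ℝ) V d)
      (fun m => (α (-m)).dualMap) := by
  intro i
  have h := AcyclicProjectiveSplits.mvPolynomial ℝ r
  obtain ⟨a, ha, ha'⟩ := dualD_apply_eq (MvPolynomial (Fin r) ℝ) V d i
  obtain ⟨a', ha2, ha2'⟩ := dualD_apply_eq (MvPolynomial (Fin r) ℝ) V' d' i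
  obtain ⟨b, hb, hb'⟩ := dualD_apply_eq (MvPolynomial (Fin r) ℝ) V d (i + 1)
  obtain ⟨b', hb2, hb2'⟩ := dualD_apply_eq (MvPolynomial (Fin r) ℝ) V' d' (i + 1)
  have e1 : -(i + 1 + 1) + 1 = -(i + 1) := by omega
  have e2 : -(i + 1) + 1 = -i := by omega
  constructor
  · rintro z hz ⟨w', hw'⟩
    obtain ⟨w, hw⟩ := dual_injective h hproj hproj' hd hd' hα hqi
      (-(i + 1 + 1)) (-(i + 1)) (-i) e1 e2 z
      (fun x => by
        have h1 := hb2' z x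
        rw [hz, LinearMap.zero_apply] at h1
        linear_combination (-b') * h1 - z (vcast (MvPolynomial (Fin r) ℝ) V' e1 (d' _ x)) * hb2)
      (a • w') (fun x => by
        have h1 := ha' w' x
        rw [← hw'] at h1
        exact h1)
    refine ⟨a' • w, LinearMap.ext fun x => ?_⟩
    rw [ha2', hw x, LinearMap.smul_apply, smul_eq_mul, ← mul_assoc, ha2, one_mul]
  · intro z' hz'
    obtain ⟨z, hz, w, hw⟩ := dual_surjective h hproj hproj' hd hd' hα hqi
      (-(i + 1 + 1)) (-(i + 1)) (-i) e1 e2 z'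
      (fun x => by
        have h1 := hb' z' x
        rw [hz', LinearMap.zero_apply] at h1
        linear_combination (-b) * h1 - z' (vcast (MvPolynomial (Fin r) ℝ) V e1 (d _ x)) * hb)
    refine ⟨z, LinearMap.ext fun x => ?_, a • w, LinearMap.ext fun x => ?_⟩
    · rw [hb2', hz x, mul_zero, LinearMap.zero_apply]
    · rw [ha', LinearMap.smul_apply, smul_eq_mul, ← mul_assoc, ha, one_mul]
      exact hw x
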